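/- Let 0 < a_1 < a_2 be integers with gcd(a_1, a_2) = 1. Then χ(a_1, a_2) = 4 if (a_1, a_2) = (1, 2), and χ(a_1, a_2) = 3 otherwise. -/

import Mathlib

/-- The shift action of `ℤ` on `α^ℤ`: `(s · x)(n) = x(n + s)`. -/
def shift {α : Type*} (s : ℤ) (x : ℤ → α) : ℤ → α := fun n => x (n + s)

/-- The free part `F(2^ℤ)` of the shift action on `2^ℤ = (ℤ → Bool)`. -/
def FreePart : Set (ℤ → Bool) := {x | ∀ s : ℤ, s ≠ 0 → shift s x ≠ x}

/-- `c` is a Borel proper coloring of the Schreier graph `G_S` on `F(2^ℤ)`,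
where `S = {±a : a ∈ A}`: `c` is Borel and `c(x) ≠ c(s · x)` for all `x` and `s ∈ S`. -/
def IsBorelColoring (A : Finset ℕ) {k : ℕ}
    (c : {x : ℤ → Bool // x ∈ FreePart} → Fin k) : Prop :=
  Measurable c ∧
    ∀ (x : {x : ℤ → Bool // x ∈ FreePart}) (a : ℕ), a ∈ A →
      ∀ (h : shift (a : ℤ) x.1 ∈ FreePart), c x ≠ c ⟨shift (a : ℤ) x.1, h⟩

/-- The Borel chromatic number `χ(a₁, …, aₙ)` of the Schreier graph `G_S` on `F(2^ℤ)`,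
where `S = {±a : a ∈ A}`: the least `k` admitting a Borel proper `k`-coloring. -/
noncomputable def borelChromatic (A : Finset ℕ) : ℕ :=
  sInf {k : ℕ | ∃ c : {x : ℤ → Bool // x ∈ FreePart} → Fin k, IsBorelColoring A c}

/-! Lower bounds come from Baire category: some color class of a Borel coloring `c` is nonmeager, so
it meets its translates by all but finitely many `n`. If `c` is moreover invariant under some
`p ≠ 0`, then it cannot separate `x` from `a · x` for any `a`. A 2-coloring for `{a}` is invariant
under `2 * a`, and a 3-coloring for `{a, 2 * a}` is invariant under `3 * a`.

Upper bounds come from rotations of the circle `ℝ / ℤ`. For every `θ`, a Borel set that meets each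
orbit with long bounded gaps yields a Borel map `φ` to the circle with `φ (1 · x) ≈ φ x + θ`: on a
gap of length `L`, rotate by a multiple of `1 / L` close to `θ`. If `a₁θ` and `a₂θ` are at distance
more than `1 / k` from `0`, then cutting the circle into `k` arcs gives a proper `k`-coloring. For
coprime `a₁, a₂` and `s = a₁ + a₂`, some multiple `θ` of `1 / s` has `a₁θ = -a₂θ = ⌊s / 2⌋ / s`.
This exceeds `1 / 4` for all `s ≥ 2`, and `1 / 3` unless `s = 3`. The general case follows by
dividing `θ` by `gcd a₁ a₂`. -/

open Filter Set Topology

section Shift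

variable {α : Type*}

theorem shift_shift (s t : ℤ) (x : ℤ → α) : shift s (shift t x) = shift (s + t) x :=
  funext fun n => congrArg x (add_assoc n s t)

theorem shift_zero (x : ℤ → α) : shift 0 x = x :=
  funext fun n => congrArg x (add_zero n)

theorem shift_injective (s : ℤ) : Function.Injective (shift s : (ℤ → α) → ℤ → α) :=
  Function.LeftInverse.injective (g := shift (-s)) fun x => by
    rw [shift_shift, neg_add_cancel, shift_zero]

variable [TopologicalSpace α]

theorem continuous_shift (s : ℤ) : Continuous (shift s : (ℤ → α) → ℤ → α) :=
  continuous_pi fun n => continuous_apply (n + s)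

theorem isOpenMap_shift (s : ℤ) : IsOpenMap (shift s : (ℤ → α) → ℤ → α) :=
  IsOpenMap.of_inverse (continuous_shift (-s))
    (fun x => by rw [shift_shift, add_neg_cancel, shift_zero])
    (fun x => by rw [shift_shift, neg_add_cancel, shift_zero])

theorem isOpen_setOf_shift_ne [T2Space α] (s : ℤ) : IsOpen {x : ℤ → α | shift s x ≠ x} :=
  isOpen_ne_fun (continuous_shift s) continuous_id

theorem dense_setOf_shift_ne [Nontrivial α] {s : ℤ} (hs : s ≠ 0) :
    Dense {x : ℤ → α | shift s x ≠ x} := by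
  refine dense_iff_inter_open.2 fun U hU ⟨x, hx⟩ => ?_
  obtain ⟨I, u, hu, hIU⟩ := isOpen_pi_iff.1 hU x hx
  obtain ⟨m, hm⟩ := Infinite.exists_notMem_finset I
  obtain ⟨v, hv⟩ := exists_ne (x (m - s))
  refine ⟨Function.update x m v, hIU fun i hi => ?_, fun h => hv ?_⟩
  · rw [Function.update_of_ne (ne_of_mem_of_not_mem hi hm)]
    exact (hu i hi).2
  · simpa [shift, hs] using congrFun h (m - s)

theorem eventually_inter_shift_preimage_nonempty {U V : Set (ℤ → α)} (hU : IsOpen U)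
    (hV : IsOpen V) (hUne : U.Nonempty) (hVne : V.Nonempty) :
    ∀ᶠ n in cofinite, (U ∩ shift n ⁻¹' V).Nonempty := by
  obtain ⟨x, hx⟩ := hUne
  obtain ⟨y, hy⟩ := hVne
  obtain ⟨I, u, hu, hIU⟩ := isOpen_pi_iff.1 hU x hx
  obtain ⟨J, v, hv, hJV⟩ := isOpen_pi_iff.1 hV y hy
  filter_upwards [(Finset.image₂ (· - ·) I J).eventually_cofinite_notMem] with n hn
  refine ⟨fun i => if i ∈ I then x i else y (i - n), hIU fun i hi => ?_, hJV fun j hj => ?_⟩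
  · simpa [Finset.mem_coe.1 hi] using (hu i hi).2
  · have hjn : j + n ∉ I := fun h => hn (Finset.mem_image₂.2 ⟨j + n, h, j, hj, by ring⟩)
    simpa [shift, hjn] using (hv j hj).2

end Shift

section BaireCategory

variable {X : Type*} [TopologicalSpace X]

theorem exists_isOpen_nonempty_residualEq {A : Set X} (hA : BaireMeasurableSet A)
    (hne : ¬IsMeagre A) : ∃ U, IsOpen U ∧ U.Nonempty ∧ A =ᶠ[residual X] U := by
  obtain ⟨U, hU, hAU⟩ := hA.residualEq_isOpen
  refine ⟨U, hU, nonempty_iff_ne_empty.2 fun h => hne ?_, hAU⟩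
  exact eventuallyEq_empty.1 (h ▸ hAU)

variable [BaireSpace X]

theorem inter_preimage_nonempty_of_residualEq {f : X → X} (hf : Continuous f)
    (hfo : IsOpenMap f) {A U : Set X} (hU : IsOpen U) (hAU : A =ᶠ[residual X] U)
    (hne : (U ∩ f ⁻¹' U).Nonempty) : (A ∩ f ⁻¹' A).Nonempty := by
  have hpre : f ⁻¹' A =ᶠ[residual X] f ⁻¹' U :=
    (tendsto_residual_of_isOpenMap hf hfo).eventually hAU
  obtain ⟨x, hxU, hx⟩ := (dense_of_mem_residual (hAU.inter hpre)).inter_open_nonempty _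
    (hU.inter (hU.preimage hf)) hne
  exact ⟨x, hx.mpr hxU⟩

theorem exists_not_isMeagre_of_residual_subset_iUnion [Nonempty X] {ι : Sort*} [Countable ι]
    {R : Set X} {A : ι → Set X} (hR : R ∈ residual X) (hRA : R ⊆ ⋃ i, A i) :
    ∃ i, ¬IsMeagre (A i) := by
  by_contra! hA
  exact not_isMeagre_of_mem_residual hR ((isMeagre_iUnion hA).mono hRA)

end BaireCategory

theorem eventually_inter_shift_preimage_nonempty_of_not_isMeagre {α : Type*}
    [TopologicalSpace α] [BaireSpace (ℤ → α)] {A : Set (ℤ → α)} (hA : BaireMeasurableSet A)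
    (hne : ¬IsMeagre A) : ∀ᶠ n in cofinite, (A ∩ shift n ⁻¹' A).Nonempty := by
  obtain ⟨U, hU, hUne, hAU⟩ := exists_isOpen_nonempty_residualEq hA hne
  filter_upwards [eventually_inter_shift_preimage_nonempty hU hU hUne hUne] with n hn
  exact inter_preimage_nonempty_of_residualEq (continuous_shift n) (isOpenMap_shift n) hU hAU hn

namespace FreePart

theorem shift_mem (s : ℤ) {x : ℤ → Bool} (hx : x ∈ FreePart) : shift s x ∈ FreePart := by
  intro t ht h
  refine hx t ht (shift_injective s ?_)
  rwa [shift_shift, add_comm, ← shift_shift]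

instance instAddAction : AddAction ℤ FreePart where
  vadd s x := ⟨shift s x, shift_mem s x.2⟩
  zero_vadd x := Subtype.ext (shift_zero x.1)
  add_vadd s t x := Subtype.ext (shift_shift s t x.1).symm

theorem coe_vadd (s : ℤ) (x : FreePart) : ((s +ᵥ x : FreePart) : ℤ → Bool) = shift s x :=
  rfl

instance instIsCancelVAdd : IsCancelVAdd ℤ FreePart where
  left_cancel' s _ _ := vadd_left_cancel s
  right_cancel' s t x h := by
    by_contra hst
    refine x.2 (-t + s) (by rwa [ne_eq, neg_add_eq_zero, eq_comm]) ?_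
    rw [← shift_shift, ← coe_vadd s, h, coe_vadd, shift_shift, neg_add_cancel, shift_zero]

instance instContinuousConstVAdd : ContinuousConstVAdd ℤ FreePart where
  continuous_const_vadd s :=
    ((continuous_shift s).comp continuous_subtype_val).subtype_mk _

end FreePart

theorem freePart_eq_biInter : FreePart = ⋂ s ∈ ({0}ᶜ : Set ℤ), {x | shift s x ≠ x} := by
  ext x
  simp [FreePart]

theorem measurableSet_freePart : MeasurableSet FreePart :=
  freePart_eq_biInter ▸ .biInter (to_countable _) fun s _ =>
    (isOpen_setOf_shift_ne s).measurableSet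

theorem freePart_mem_residual : FreePart ∈ residual (ℤ → Bool) :=
  freePart_eq_biInter ▸ (countable_bInter_mem (to_countable _)).2 fun s hs =>
    residual_of_dense_open (isOpen_setOf_shift_ne s) (dense_setOf_shift_ne hs)

section Recurrence

variable {β : Type*} [Countable β] [MeasurableSpace β] [MeasurableSingletonClass β]
  {c : FreePart → β}

theorem eventually_exists_eq_vadd (hc : Measurable c) :
    ∀ᶠ n : ℤ in cofinite, ∃ x, c x = c (n +ᵥ x) := by
  let A : β → Set (ℤ → Bool) := fun i => Subtype.val '' (c ⁻¹' {i})
  have hA (i : β) : MeasurableSet (A i) :=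
    measurableSet_freePart.subtype_image (hc (measurableSet_singleton i))
  have hcover : FreePart ⊆ ⋃ i, A i := fun x hx => mem_iUnion.2 ⟨c ⟨x, hx⟩, ⟨x, hx⟩, rfl, rfl⟩
  obtain ⟨i, hi⟩ := exists_not_isMeagre_of_residual_subset_iUnion freePart_mem_residual hcover
  filter_upwards [eventually_inter_shift_preimage_nonempty_of_not_isMeagre
    (hA i).baireMeasurableSet hi] with n hn
  obtain ⟨_, ⟨x, rfl, rfl⟩, y, hy, hyx⟩ := hn
  have hnx : y = n +ᵥ x := Subtype.ext hyx
  exact ⟨x, hnx ▸ hy.symm⟩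

theorem exists_eq_vadd_of_periodic (hc : Measurable c) {p : ℤ} (hp : p ≠ 0)
    (hper : ∀ x, c (p +ᵥ x) = c x) (a : ℤ) : ∃ x, c x = c (a +ᵥ x) := by
  have hinj : Function.Injective fun n : ℤ => a + n * p :=
    (add_right_injective a).comp (mul_left_injective₀ hp)
  obtain ⟨n, x, hx⟩ := (hinj.tendsto_cofinite.eventually (eventually_exists_eq_vadd hc)).exists
  have horbit : Function.Periodic (fun m : ℤ => c (m +ᵥ x)) p := fun m => by
    change c ((m + p) +ᵥ x) = c (m +ᵥ x)
    rw [add_comm, add_vadd, hper]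
  exact ⟨x, hx.trans (horbit.int_mul n a)⟩

end Recurrence

theorem IsBorelColoring.ne_vadd {A : Finset ℕ} {k : ℕ} {c : FreePart → Fin k}
    (hc : IsBorelColoring A c) {a : ℕ} (ha : a ∈ A) (x : FreePart) : c x ≠ c ((a : ℤ) +ᵥ x) :=
  hc.2 x a ha _

theorem IsBorelColoring.three_le {A : Finset ℕ} {k a : ℕ} {c : FreePart → Fin k}
    (hc : IsBorelColoring A c) (hpos : 0 < a) (ha : a ∈ A) : 3 ≤ k := by
  by_contra! hk
  have hper (x : FreePart) : c ((2 * a : ℤ) +ᵥ x) = c x := by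
    have h₀ := hc.ne_vadd ha x
    have h₁ := hc.ne_vadd ha ((a : ℤ) +ᵥ x)
    rw [vadd_vadd, ← two_mul] at h₁
    omega
  obtain ⟨x, hx⟩ := exists_eq_vadd_of_periodic hc.1 (by positivity) hper a
  exact hc.ne_vadd ha x hx

theorem IsBorelColoring.four_le {A : Finset ℕ} {k a : ℕ} {c : FreePart → Fin k}
    (hc : IsBorelColoring A c) (hpos : 0 < a) (ha : a ∈ A) (h2a : 2 * a ∈ A) : 4 ≤ k := by
  by_contra! hk
  have hper (x : FreePart) : c ((3 * a : ℤ) +ᵥ x) = c x := by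
    have h₀₁ := hc.ne_vadd ha x
    have h₀₂ : c x ≠ c ((2 * a : ℤ) +ᵥ x) := hc.ne_vadd h2a x
    have h₁₂ : c ((a : ℤ) +ᵥ x) ≠ c ((2 * a : ℤ) +ᵥ x) := by
      simpa [vadd_vadd, ← two_mul] using hc.ne_vadd ha ((a : ℤ) +ᵥ x)
    have h₁₃ : c ((a : ℤ) +ᵥ x) ≠ c ((3 * a : ℤ) +ᵥ x) := by
      simpa [vadd_vadd, ← add_one_mul] using hc.ne_vadd h2a ((a : ℤ) +ᵥ x)
    have h₂₃ : c ((2 * a : ℤ) +ᵥ x) ≠ c ((3 * a : ℤ) +ᵥ x) := by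
      simpa [vadd_vadd, ← one_add_mul] using hc.ne_vadd ha ((2 * a : ℤ) +ᵥ x)
    omega
  obtain ⟨x, hx⟩ := exists_eq_vadd_of_periodic hc.1 (by positivity) hper a
  exact hc.ne_vadd ha x hx

section SchreierGraph

variable {G X : Type*} [AddGroup G] [AddAction G X] {S : Set G} {W : ℕ → Set X}

/-- `M` is an independent set of the Schreier graph that joins `x` to `g +ᵥ x` for `g ∈ S`. -/
def IsSchreierIndependent (S : Set G) (M : Set X) : Prop :=
  ∀ x ∈ M, ∀ g ∈ S, g +ᵥ x ∉ M

theorem exists_isOpen_isSchreierIndependent [TopologicalSpace X] [T2Space X]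
    [ContinuousConstVAdd G X] (hS : S.Finite) {x : X} (hx : ∀ g ∈ S, g +ᵥ x ≠ x) :
    ∃ U, IsOpen U ∧ x ∈ U ∧ IsSchreierIndependent S U := by
  choose! V U hV hU hxV hxU hVU using fun g hg => t2_separation (hx g hg)
  refine ⟨⋂ g ∈ S, U g ∩ (g +ᵥ ·) ⁻¹' V g, hS.isOpen_biInter fun g hg => ?_,
    mem_iInter₂.2 fun g hg => ⟨hxU g hg, hxV g hg⟩, fun y hy g hg hgy => ?_⟩
  · exact (hU g hg).inter ((hV g hg).preimage (continuous_const_vadd g))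
  · exact disjoint_left.1 (hVU g hg) (mem_iInter₂.1 hy g hg).2 (mem_iInter₂.1 hgy g hg).1

theorem exists_seq_isSchreierIndependent_cover [TopologicalSpace X] [T2Space X]
    [SecondCountableTopology X] [MeasurableSpace X] [OpensMeasurableSpace X]
    [ContinuousConstVAdd G X] (hS : S.Finite) (hfree : ∀ g ∈ S, ∀ x : X, g +ᵥ x ≠ x) :
    ∃ W : ℕ → Set X, (∀ n, MeasurableSet (W n) ∧ IsSchreierIndependent S (W n)) ∧
      ⋃ n, W n = univ := by
  choose U hUo hxU hU using
    fun x : X => exists_isOpen_isSchreierIndependent hS fun g hg => hfree g hg x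
  obtain ⟨s, hs, hsU⟩ := TopologicalSpace.countable_cover_nhds fun x => (hUo x).mem_nhds (hxU x)
  refine (exists_seq_cover_iff_countable
    (p := fun W => MeasurableSet W ∧ IsSchreierIndependent S W)
    ⟨∅, .empty, fun _ h => h.elim⟩).2
    ⟨U '' s, hs.image U, forall_mem_image.2 fun x _ => ⟨(hUo x).measurableSet, hU x⟩, ?_⟩
  rwa [sUnion_image]

/-- Greedy construction of a maximal independent set out of independent sets `W 0, W 1, …`:
stage `n` adds the points of `W n` that have no neighbour chosen at an earlier stage. -/
def greedyIndependent (S : Set G) (W : ℕ → Set X) : ℕ → Set X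
  | 0 => ∅
  | n + 1 => greedyIndependent S W n ∪ {x ∈ W n | ∀ g ∈ S, g +ᵥ x ∉ greedyIndependent S W n}

theorem monotone_greedyIndependent : Monotone (greedyIndependent S W) :=
  monotone_nat_of_le_succ fun _ => subset_union_left

theorem measurableSet_greedyIndependent [MeasurableSpace X] [MeasurableConstVAdd G X]
    (hS : S.Countable) (hW : ∀ n, MeasurableSet (W n)) (n : ℕ) :
    MeasurableSet (greedyIndependent S W n) := by
  induction n with
  | zero => exact .empty
  | succ n ih =>
    have hnew : {x ∈ W n | ∀ g ∈ S, g +ᵥ x ∉ greedyIndependent S W n} =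
        W n ∩ ⋂ g ∈ S, ((g +ᵥ ·) ⁻¹' greedyIndependent S W n)ᶜ := by
      ext x
      simp
    rw [greedyIndependent, hnew]
    exact ih.union ((hW n).inter
      (.biInter hS fun g _ => (measurable_const_vadd g ih).compl))

theorem isSchreierIndependent_greedyIndependent (hS : ∀ g ∈ S, -g ∈ S)
    (hW : ∀ n, IsSchreierIndependent S (W n)) (n : ℕ) :
    IsSchreierIndependent S (greedyIndependent S W n) := by
  induction n with
  | zero => exact fun _ h => h.elim
  | succ n ih =>
    rintro x (hx | ⟨hxW, hx⟩) g hg (hgx | ⟨hgxW, hgx⟩)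
    · exact ih x hx g hg hgx
    · exact hgx (-g) (hS g hg) (by rwa [neg_vadd_vadd])
    · exact hx g hg hgx
    · exact hW n x hxW g hg hgxW

theorem isSchreierIndependent_iUnion {M : ℕ → Set X} (hmono : Monotone M)
    (hM : ∀ n, IsSchreierIndependent S (M n)) : IsSchreierIndependent S (⋃ n, M n) := by
  intro x hx g hg hgx
  obtain ⟨m, hm⟩ := mem_iUnion.1 hx
  obtain ⟨n, hn⟩ := mem_iUnion.1 hgx
  exact hM (max m n) x (hmono (le_max_left m n) hm) g hg (hmono (le_max_right m n) hn)

theorem exists_measurableSet_maximal_isSchreierIndependent [TopologicalSpace X] [T2Space X]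
    [SecondCountableTopology X] [MeasurableSpace X] [BorelSpace X] [ContinuousConstVAdd G X]
    (hS : S.Finite) (hneg : ∀ g ∈ S, -g ∈ S) (hfree : ∀ g ∈ S, ∀ x : X, g +ᵥ x ≠ x) :
    ∃ M : Set X, MeasurableSet M ∧ IsSchreierIndependent S M ∧
      ∀ x, x ∈ M ∨ ∃ g ∈ S, g +ᵥ x ∈ M := by
  obtain ⟨W, hW, hcover⟩ := exists_seq_isSchreierIndependent_cover hS hfree
  refine ⟨⋃ n, greedyIndependent S W n,
    .iUnion (measurableSet_greedyIndependent hS.countable fun n => (hW n).1),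
    isSchreierIndependent_iUnion monotone_greedyIndependent
      (isSchreierIndependent_greedyIndependent hneg fun n => (hW n).2), fun x => ?_⟩
  obtain ⟨n, hxn⟩ := mem_iUnion.1 (hcover ▸ mem_univ x)
  by_cases hx : ∀ g ∈ S, g +ᵥ x ∉ greedyIndependent S W n
  · exact .inl (mem_iUnion.2 ⟨n + 1, .inr ⟨hxn, hx⟩⟩)
  · push Not at hx
    obtain ⟨g, hg, hgx⟩ := hx
    exact .inr ⟨g, hg, mem_iUnion.2 ⟨n, hgx⟩⟩

end SchreierGraph

section EntryTime

variable {G X : Type*} [AddMonoid G] [AddAction G X] {g : G} {M : Set X} {x : X}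

/-- Every forward orbit of `g` meets `M`. -/
def IsSweepingOut (g : G) (M : Set X) : Prop :=
  ∀ x, ∃ n : ℕ, n • g +ᵥ x ∈ M

/-- The least `n` such that `n` steps of `g` take `x` into `M` (and `0` if there is none). -/
noncomputable def entryTime (g : G) (M : Set X) (x : X) : ℕ :=
  sInf {n : ℕ | n • g +ᵥ x ∈ M}

theorem IsSweepingOut.entryTime_vadd_mem (hM : IsSweepingOut g M) (x : X) :
    entryTime g M x • g +ᵥ x ∈ M :=
  Nat.sInf_mem (hM x)

theorem entryTime_eq_zero (hx : x ∈ M) : entryTime g M x = 0 :=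
  Nat.sInf_eq_zero.2 (.inl (by simpa using hx))

theorem IsSweepingOut.entryTime_eq_add_one (hM : IsSweepingOut g M) (hx : x ∉ M) :
    entryTime g M x = entryTime g M (g +ᵥ x) + 1 := by
  have hpos : 1 ≤ entryTime g M x := by
    refine Nat.one_le_iff_ne_zero.2 fun h => hx ?_
    simpa [h] using hM.entryTime_vadd_mem x
  simpa only [entryTime, succ_nsmul, vadd_vadd] using (Nat.sInf_add hpos).symm

theorem IsSweepingOut.measurable_entryTime [MeasurableSpace X] [MeasurableConstVAdd G X]
    (hM : IsSweepingOut g M) (hMm : MeasurableSet M) : Measurable (entryTime g M) := by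
  classical
  have hfind : entryTime g M = fun x => Nat.find (hM x) := funext fun x => Nat.sInf_def (hM x)
  exact hfind ▸ measurable_find hM fun n => measurable_const_vadd (n • g) hMm

end EntryTime

section Phase

variable {G X E : Type*} [AddGroup G] [AddAction G X] [AddCommMonoid E]
  {g : G} {M : Set X} {ρ : ℕ → E}

theorem isSweepingOut_of_forall_exists_zsmul {N : ℕ}
    (hM : ∀ x, ∃ n : ℤ, |n| ≤ N ∧ n • g +ᵥ x ∈ M) : IsSweepingOut g M := by
  intro x
  obtain ⟨n, hn, hx⟩ := hM (N • g +ᵥ x)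
  have hnonneg : 0 ≤ n + N := by linarith [neg_le_of_abs_le hn]
  refine ⟨(n + N).toNat, ?_⟩
  rwa [vadd_vadd, ← natCast_zsmul g N, ← add_zsmul, ← Int.toNat_of_nonneg hnonneg,
    natCast_zsmul] at hx

/-- The length of the gap of `M` that contains the step from `x` to `g +ᵥ x`. -/
noncomputable def gapLength (g : G) (M : Set X) (x : X) : ℕ :=
  entryTime (-g) M x + entryTime g M (g +ᵥ x) + 1

/-- The phase that vanishes on `M` and increases by `ρ L` at each step of `g` across a gap of
length `L`. -/
noncomputable def phase (g : G) (ρ : ℕ → E) (M : Set X) (x : X) : E :=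
  entryTime (-g) M x • ρ (gapLength g M x)

theorem gapLength_nsmul_vadd (x : X) :
    gapLength g M x • g +ᵥ entryTime (-g) M x • -g +ᵥ x =
      entryTime g M (g +ᵥ x) • g +ᵥ g +ᵥ x := by
  simp only [gapLength, vadd_vadd, ← succ_nsmul]
  rw [add_assoc, add_comm, add_nsmul, add_assoc, neg_nsmul, add_neg_cancel, add_zero]

theorem lt_gapLength {N : ℕ} (hfwd : IsSweepingOut g M) (hbwd : IsSweepingOut (-g) M)
    (hgap : ∀ x ∈ M, ∀ n : ℕ, n ≠ 0 → n ≤ N → n • g +ᵥ x ∉ M) (x : X) :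
    N < gapLength g M x := by
  by_contra! hle
  refine hgap _ (hbwd.entryTime_vadd_mem x) (gapLength g M x) (Nat.succ_ne_zero _) hle ?_
  rw [gapLength_nsmul_vadd]
  exact hfwd.entryTime_vadd_mem (g +ᵥ x)

theorem phase_vadd (hfwd : IsSweepingOut g M) (hbwd : IsSweepingOut (-g) M)
    (hρ : ∀ n, n • ρ n = 0) (x : X) :
    phase g ρ M (g +ᵥ x) = phase g ρ M x + ρ (gapLength g M x) := by
  rw [phase, phase, ← succ_nsmul]
  by_cases hx : g +ᵥ x ∈ M
  · have hlen : gapLength g M x = entryTime (-g) M x + 1 := by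
      rw [gapLength, entryTime_eq_zero hx]
    rw [entryTime_eq_zero hx, zero_nsmul, ← hlen, hρ]
  · have hback : entryTime (-g) M (g +ᵥ x) = entryTime (-g) M x + 1 := by
      rw [hbwd.entryTime_eq_add_one hx, neg_vadd_vadd]
    have hlen : gapLength g M (g +ᵥ x) = gapLength g M x := by
      rw [gapLength, gapLength, hback, hfwd.entryTime_eq_add_one hx]
      ring
    rw [hback, hlen]

theorem measurable_phase [MeasurableSpace X] [MeasurableConstVAdd G X] [MeasurableSpace E]
    (hM : MeasurableSet M) (hfwd : IsSweepingOut g M) (hbwd : IsSweepingOut (-g) M) :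
    Measurable (phase g ρ M) := by
  have hback := hbwd.measurable_entryTime hM
  have hahead := (hfwd.measurable_entryTime hM).comp (measurable_const_vadd g)
  exact (measurable_of_countable fun p : ℕ × ℕ => p.1 • ρ (p.1 + p.2 + 1)).comp
    (hback.prodMk hahead)

end Phase

section Circle

theorem exists_nsmul_eq_zero_mul_norm_sub_le (θ : UnitAddCircle) (n : ℕ) :
    ∃ ρ : UnitAddCircle, n • ρ = 0 ∧ n * ‖ρ - θ‖ ≤ 1 := by
  obtain rfl | hn := eq_or_ne n 0
  · exact ⟨0, by simp⟩
  obtain ⟨y, rfl⟩ := QuotientAddGroup.mk_surjective θ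
  have hn' : (n : ℝ) ≠ 0 := Nat.cast_ne_zero.2 hn
  refine ⟨((round (n * y) / n : ℝ) : UnitAddCircle), ?_, ?_⟩
  · rw [← AddCircle.coe_nsmul, nsmul_eq_mul, mul_div_cancel₀ _ hn']
    exact AddCircle.coe_eq_zero_iff _ |>.2 ⟨round (n * y), by simp⟩
  · calc n * ‖((round (n * y) / n : ℝ) : UnitAddCircle) - y‖
        ≤ n * |round (n * y) / n - y| := by
          gcongr
          exact QuotientAddGroup.norm_mk_le_norm
      _ = |n * y - round (n * y)| := by
          rw [abs_sub_comm, ← Nat.abs_cast n, ← abs_mul, Nat.abs_cast, mul_sub,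
            mul_div_cancel₀ _ hn']
      _ ≤ 1 := (abs_sub_round _).trans (by norm_num)

/-- The index of the arc `[i / k, (i + 1) / k)` of the circle that contains `u`. -/
noncomputable def arcIndex (k : ℕ) [NeZero k] (u : UnitAddCircle) : Fin k :=
  ⟨⌊k * (AddCircle.equivIco 1 0 u : ℝ)⌋₊, by
    obtain ⟨h0, h1⟩ := (AddCircle.equivIco (1 : ℝ) 0 u).2
    have hk : (0 : ℝ) < k := Nat.cast_pos.2 (NeZero.pos k)
    rw [Nat.floor_lt (by positivity)]
    nlinarith⟩

theorem measurable_arcIndex (k : ℕ) [NeZero k] : Measurable (arcIndex k) := by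
  have hval : Measurable fun u : UnitAddCircle => ⌊k * (AddCircle.equivIco 1 0 u : ℝ)⌋₊ :=
    Nat.measurable_floor.comp ((measurable_subtype_coe.comp
      (AddCircle.measurableEquivIco 1 0).measurable).const_mul _)
  refine measurable_to_countable' fun i => ?_
  convert hval (measurableSet_singleton (i : ℕ)) using 1
  ext u
  simp [arcIndex, Fin.ext_iff]

theorem norm_sub_lt_of_arcIndex_eq {k : ℕ} [NeZero k] {u v : UnitAddCircle}
    (h : arcIndex k u = arcIndex k v) : ‖u - v‖ < 1 / k := by
  let x : ℝ := AddCircle.equivIco 1 0 u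
  let y : ℝ := AddCircle.equivIco 1 0 v
  have hx : 0 ≤ k * x := mul_nonneg k.cast_nonneg (AddCircle.equivIco 1 0 u).2.1
  have hy : 0 ≤ k * y := mul_nonneg k.cast_nonneg (AddCircle.equivIco 1 0 v).2.1
  have hfloor : ⌊k * x⌋ = ⌊k * y⌋ := by
    rw [← Int.natCast_floor_eq_floor hx, ← Int.natCast_floor_eq_floor hy]
    exact congrArg (fun i : Fin k => (i : ℤ)) h
  rw [lt_div_iff₀' (Nat.cast_pos.2 (NeZero.pos k))]
  calc k * ‖u - v‖ = k * ‖((x - y : ℝ) : UnitAddCircle)‖ := by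
        rw [AddCircle.coe_sub, AddCircle.coe_equivIco, AddCircle.coe_equivIco]
    _ ≤ k * |x - y| := by
        gcongr
        exact QuotientAddGroup.norm_mk_le_norm
    _ = |k * x - k * y| := by rw [← mul_sub, abs_mul, Nat.abs_cast]
    _ < 1 := Int.abs_sub_lt_one_of_floor_eq_floor hfloor

end Circle

theorem norm_nsmul_vadd_sub_le {G X E : Type*} [AddMonoid G] [AddAction G X]
    [SeminormedAddCommGroup E] {g : G} {φ : X → E} {θ : E} {ε : ℝ}
    (hφ : ∀ x, ‖φ (g +ᵥ x) - φ x - θ‖ ≤ ε) (n : ℕ) (x : X) :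
    ‖φ (n • g +ᵥ x) - φ x - n • θ‖ ≤ n * ε := by
  induction n with
  | zero => simp
  | succ n ih =>
    calc ‖φ ((n + 1) • g +ᵥ x) - φ x - (n + 1) • θ‖
        = ‖(φ (g +ᵥ n • g +ᵥ x) - φ (n • g +ᵥ x) - θ) + (φ (n • g +ᵥ x) - φ x - n • θ)‖ := by
          rw [vadd_vadd, ← succ_nsmul', succ_nsmul θ]
          congr 1
          abel
      _ ≤ ε + n * ε := norm_add_le_of_le (hφ _) ih
      _ = (n + 1 : ℕ) * ε := by push_cast; ring

theorem exists_pos_forall_nsmul_add_lt (A : Finset ℕ) {f : ℕ → ℝ} {r : ℝ}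
    (hf : ∀ a ∈ A, r < f a) : ∃ ε > 0, ∀ a ∈ A, a * ε + r < f a := by
  have hlim (a : ℕ) : Tendsto (fun ε : ℝ => a * ε + r) (𝓝[>] 0) (𝓝 r) := by
    have : ContinuousAt (fun ε : ℝ => a * ε + r) 0 := by fun_prop
    simpa using this.tendsto.mono_left nhdsWithin_le_nhds
  have hsmall : ∀ᶠ ε in 𝓝[>] (0 : ℝ), ∀ a ∈ A, a * ε + r < f a :=
    (eventually_all_finset A).2 fun a ha => (hlim a).eventually_lt_const (hf a ha)
  obtain ⟨ε, hε, hA⟩ := (eventually_mem_nhdsWithin.and hsmall).exists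
  exact ⟨ε, hε, hA⟩

section BorelColoring

variable {X : Type*} [AddAction ℤ X] [IsCancelVAdd ℤ X] [TopologicalSpace X] [T2Space X]
  [SecondCountableTopology X] [MeasurableSpace X] [BorelSpace X] [ContinuousConstVAdd ℤ X]

variable (X) in
theorem exists_measurableSet_sweepingOut_with_gaps (N : ℕ) :
    ∃ M : Set X, MeasurableSet M ∧ IsSweepingOut (1 : ℤ) M ∧ IsSweepingOut (-1 : ℤ) M ∧
      ∀ x ∈ M, ∀ n : ℕ, n ≠ 0 → n ≤ N → n • (1 : ℤ) +ᵥ x ∉ M := by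
  let S : Set ℤ := {n | n ≠ 0 ∧ |n| ≤ N}
  have hS : S.Finite := (finite_Icc (-N : ℤ) N).subset fun n hn => abs_le.1 hn.2
  obtain ⟨M, hM, hindep, hmax⟩ :=
    exists_measurableSet_maximal_isSchreierIndependent (X := X) hS
      (fun n hn => ⟨neg_ne_zero.2 hn.1, (abs_neg n).trans_le hn.2⟩)
      fun n hn x hx => hn.1 (IsCancelVAdd.eq_zero_of_vadd hx)
  have hsyndetic (x : X) : ∃ n : ℤ, |n| ≤ N ∧ n +ᵥ x ∈ M := by
    rcases hmax x with hx | ⟨n, hn, hx⟩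
    · exact ⟨0, by simp, by rwa [zero_vadd]⟩
    · exact ⟨n, hn.2, hx⟩
  refine ⟨M, hM, isSweepingOut_of_forall_exists_zsmul (N := N) fun x => ?_,
    isSweepingOut_of_forall_exists_zsmul (N := N) fun x => ?_, fun x hx n h0 hn => ?_⟩
  · simpa using hsyndetic x
  · obtain ⟨n, hn, hx⟩ := hsyndetic x
    exact ⟨-n, (abs_neg n).trans_le hn, by simpa using hx⟩
  · exact hindep x hx _ ⟨by simpa using h0, by simpa using hn⟩

theorem exists_measurable_norm_vadd_sub_le (θ : UnitAddCircle) {ε : ℝ} (hε : 0 < ε) :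
    ∃ φ : X → UnitAddCircle, Measurable φ ∧ ∀ x, ‖φ ((1 : ℤ) +ᵥ x) - φ x - θ‖ ≤ ε := by
  obtain ⟨N, hN⟩ := exists_nat_gt (1 / ε)
  obtain ⟨M, hM, hfwd, hbwd, hgap⟩ := exists_measurableSet_sweepingOut_with_gaps X N
  choose ρ hρ hρθ using exists_nsmul_eq_zero_mul_norm_sub_le θ
  refine ⟨phase 1 ρ M, measurable_phase hM hfwd hbwd, fun x => ?_⟩
  have hlen : 1 / ε ≤ gapLength (1 : ℤ) M x :=
    hN.le.trans (Nat.cast_le.2 (lt_gapLength hfwd hbwd hgap x).le)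
  rw [phase_vadd hfwd hbwd hρ, add_sub_cancel_left]
  have hpos : 0 < (gapLength (1 : ℤ) M x : ℝ) := (one_div_pos.2 hε).trans_le hlen
  refine le_of_mul_le_mul_left ((hρθ _).trans ?_) hpos
  rwa [div_le_iff₀ hε] at hlen

variable (X) in
theorem exists_measurable_coloring_of_lt_norm_nsmul (A : Finset ℕ) (k : ℕ) [NeZero k]
    (θ : UnitAddCircle) (hθ : ∀ a ∈ A, 1 / k < ‖a • θ‖) :
    ∃ c : X → Fin k, Measurable c ∧ ∀ x, ∀ a ∈ A, c x ≠ c ((a : ℤ) +ᵥ x) := by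
  obtain ⟨ε, hε, hA⟩ := exists_pos_forall_nsmul_add_lt A hθ
  obtain ⟨φ, hφ, hstep⟩ := exists_measurable_norm_vadd_sub_le (X := X) θ hε
  refine ⟨arcIndex k ∘ φ, (measurable_arcIndex k).comp hφ, fun x a ha heq => ?_⟩
  have hshort : ‖φ ((a : ℤ) +ᵥ x) - φ x‖ < 1 / k :=
    norm_sub_lt_of_arcIndex_eq heq.symm
  have hdrift : ‖φ ((a : ℤ) +ᵥ x) - φ x - a • θ‖ ≤ a * ε := by
    simpa using norm_nsmul_vadd_sub_le hstep a x
  linarith [hA a ha, norm_le_norm_add_norm_sub (φ ((a : ℤ) +ᵥ x) - φ x) (a • θ)]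

end BorelColoring

section Rotation

theorem exists_nsmul_eq_of_coprime {E : Type*} [AddCommGroup E] {a n : ℕ} (h : a.Coprime n)
    {u : E} (hu : n • u = 0) : ∃ θ : E, n • θ = 0 ∧ a • θ = u := by
  have hbezout : (a : ℤ) * a.gcdA n + n * a.gcdB n = 1 := by
    rw [← Nat.gcd_eq_gcd_ab, h, Nat.cast_one]
  refine ⟨a.gcdA n • u, by rw [smul_comm, hu, smul_zero], ?_⟩
  calc a • a.gcdA n • u
      = ((a : ℤ) * a.gcdA n + n * a.gcdB n) • u := by
        rw [add_zsmul, mul_comm (n : ℤ), mul_zsmul, mul_zsmul, natCast_zsmul, natCast_zsmul, hu,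
          smul_zero, add_zero]
    _ = u := by rw [hbezout, one_zsmul]

theorem norm_natCast_div_two_div (n : ℕ) :
    ‖(((n / 2 : ℕ) / n : ℝ) : UnitAddCircle)‖ = ((n / 2 : ℕ) / n : ℝ) := by
  obtain rfl | hn := n.eq_zero_or_pos
  · simp
  have hlt : n / 2 < n := by omega
  have hmin : min (n / 2) (n - n / 2) = n / 2 := by omega
  simpa [Nat.mod_eq_of_lt hlt, hmin] using
    AddCircle.norm_div_natCast (p := (1 : ℝ)) (m := n / 2) (n := n)

theorem exists_norm_nsmul_eq_of_coprime {a b d : ℕ} (hab : a.Coprime b) (hd : d ≠ 0) :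
    ∃ θ : UnitAddCircle, ‖(d * a) • θ‖ = ((a + b) / 2 : ℕ) / (a + b : ℕ) ∧
      ‖(d * b) • θ‖ = ((a + b) / 2 : ℕ) / (a + b : ℕ) := by
  let s := a + b
  let u : UnitAddCircle := ((s / 2 : ℕ) / s : ℝ)
  have hs : s ≠ 0 := fun h => by
    obtain ⟨rfl, rfl⟩ := Nat.add_eq_zero_iff.1 h
    simp at hab
  have hu : s • u = 0 := by
    rw [← AddCircle.coe_nsmul, nsmul_eq_mul, mul_div_cancel₀ _ (Nat.cast_ne_zero.2 hs)]
    exact AddCircle.coe_eq_zero_iff _ |>.2 ⟨(s / 2 : ℕ), by rw [zsmul_one, Int.cast_natCast]⟩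
  obtain ⟨η, hη, haη⟩ := exists_nsmul_eq_of_coprime (Nat.coprime_self_add_right.2 hab) hu
  have hbη : b • η = -u := by rwa [add_nsmul, haη, add_comm, ← eq_neg_iff_add_eq_zero] at hη
  obtain ⟨θ, hθ⟩ := DivisibleBy.surjective_smul UnitAddCircle ℤ (Nat.cast_ne_zero.2 hd) η
  replace hθ : d • θ = η := (natCast_zsmul θ d).symm.trans hθ
  refine ⟨θ, ?_, ?_⟩
  · rw [mul_comm, mul_nsmul', hθ, haη]
    exact norm_natCast_div_two_div s
  · rw [mul_comm, mul_nsmul', hθ, hbη, norm_neg]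
    exact norm_natCast_div_two_div s

end Rotation

theorem exists_isBorelColoring_pair {a b d k : ℕ} (hab : a.Coprime b) (hd : d ≠ 0)
    (hk : a + b < k * ((a + b) / 2)) :
    ∃ c : FreePart → Fin k, IsBorelColoring {d * a, d * b} c := by
  have : NeZero k := ⟨fun h => by simp [h] at hk⟩
  have hs : 0 < a + b := Nat.pos_of_ne_zero fun h => by simp [h] at hk
  have hlt : (1 / k : ℝ) < ((a + b) / 2 : ℕ) / (a + b : ℕ) := by
    rw [div_lt_div_iff₀ (Nat.cast_pos.2 (NeZero.pos k)) (Nat.cast_pos.2 hs)]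
    exact_mod_cast by linarith
  obtain ⟨θ, ha, hb⟩ := exists_norm_nsmul_eq_of_coprime hab hd
  obtain ⟨c, hc, hne⟩ := exists_measurable_coloring_of_lt_norm_nsmul FreePart {d * a, d * b} k θ
    (by simpa [ha, hb] using hlt)
  exact ⟨c, hc, fun x n hn _ => hne x n hn⟩

theorem borelChromatic_eq_of_isLeast {A : Finset ℕ} {k : ℕ}
    (h : ∃ c : FreePart → Fin k, IsBorelColoring A c)
    (hle : ∀ (l : ℕ) (c : FreePart → Fin l), IsBorelColoring A c → k ≤ l) :
    borelChromatic A = k :=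
  IsLeast.csInf_eq ⟨h, fun l ⟨c, hc⟩ => hle l c hc⟩

theorem borelChromatic_pair_general {a₁ a₂ : ℕ} (h1 : 0 < a₁) (h2 : 0 < a₂) :
    borelChromatic {a₁, a₂} = if a₂ = 2 * a₁ ∨ a₁ = 2 * a₂ then 4 else 3 := by
  obtain ⟨a, b, hab, ha, hb⟩ := Nat.exists_coprime a₁ a₂
  have hd : a₁.gcd a₂ ≠ 0 := (Nat.gcd_pos_of_pos_left _ h1).ne'
  set d := a₁.gcd a₂
  have hcolor {k : ℕ} (hk : a + b < k * ((a + b) / 2)) :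
      ∃ c : FreePart → Fin k, IsBorelColoring {a₁, a₂} c := by
    rw [ha, hb, mul_comm a, mul_comm b]
    exact exists_isBorelColoring_pair hab hd hk
  have ha₀ : 0 < a := Nat.pos_of_mul_pos_right (ha ▸ h1)
  have hb₀ : 0 < b := Nat.pos_of_mul_pos_right (hb ▸ h2)
  split_ifs with h
  · refine borelChromatic_eq_of_isLeast (hcolor (by omega)) fun l c hc => ?_
    rcases h with rfl | rfl
    · exact hc.four_le h1 (by simp) (by simp)
    · exact hc.four_le h2 (by simp) (by simp)
  · refine borelChromatic_eq_of_isLeast (hcolor ?_) fun l c hc => hc.three_le h1 (by simp)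
    have hba : b ≠ 2 * a := by
      rintro rfl
      exact h (.inl (by rw [hb, ha]; ring))
    have hab₂ : a ≠ 2 * b := by
      rintro rfl
      exact h (.inr (by rw [hb, ha]; ring))
    omega

open Classical in
/-- For `0 < a₁ < a₂` with `gcd(a₁,a₂) = 1`, `χ(a₁,a₂) = 4` if
`(a₁,a₂) = (1,2)`, and `χ(a₁,a₂) = 3` otherwise. -/
theorem borelChromatic_pair (a₁ a₂ : ℕ) (h1 : 0 < a₁) (h2 : a₁ < a₂)
    (hgcd : Nat.gcd a₁ a₂ = 1) :
    borelChromatic {a₁, a₂} = if a₁ = 1 ∧ a₂ = 2 then 4 else 3 := by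
  have hdouble : (a₂ = 2 * a₁ ∨ a₁ = 2 * a₂) ↔ a₁ = 1 ∧ a₂ = 2 := by
    grind [Nat.gcd_mul_left_right]
  simp only [borelChromatic_pair_general h1 (h1.trans h2), hdouble]
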